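/- For every n ≥ 1 there exists a vector of entitlements b_1,…,b_n > 0 with ∑_{i=1}^n b_i = 1 whose unit upper bounds satisfy ∑_{i=1}^n b̂_i = s_n, where s_n = ∑_{i=1}^n 1/a_i. Concretely, taking b_i = 1/q_i + 1/(n·a_{n+1}), where q_i = a_i + 1, gives ∑_i b_i = 1 and b̂_i = 1/a_i for every i ≤ n. -/

import Mathlib

/-!
With `a_0 = 1` and `a_{k+1} = a_k (a_k + 1)` one has `1/(a_k + 1) = 1/a_k - 1/a_{k+1}`.
Telescoping, `∑_{i<n} 1/(a_i + 1) = 1 - 1/a_n` (`sum_one_div_sylvester`), so spreading the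
deficit `1/a_n` evenly over the `n` terms gives entitlements summing to `1`. Each share
`1/(n a_n)` of the deficit is at most `1/a_{i+1}`, so each entitlement stays in
`(1/(a_i + 1), 1/a_i]` and its unit upper bound is `1/a_i` (`floor_one_div_entitlement`).
-/

open Finset

noncomputable section

/-- The sequence a_1 = 1, a_{k+1} = a_k(a_k + 1) (0-indexed: `aseq 0 = 1`),
so the Sylvester sequence is q_i = a_i + 1. -/
def aseq : ℕ → ℕ
  | 0 => 1
  | k + 1 => aseq k * (aseq k + 1)

theorem aseq_pos (k : ℕ) : 0 < aseq k := by
  induction k with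
  | zero => simp [aseq]
  | succ k ih => simp only [aseq]; positivity

theorem aseq_mono : Monotone aseq :=
  monotone_nat_of_le_succ fun k => by
    simp only [aseq]
    exact Nat.le_mul_of_pos_right _ (Nat.succ_pos _)

/-- The Sylvester identity; it telescopes because `1/(a+1) = 1/a - 1/(a(a+1))`. -/
theorem sum_one_div_sylvester (n : ℕ) :
    ∑ i ∈ Finset.range n, (1 : ℝ) / ((aseq i : ℝ) + 1) = 1 - 1 / (aseq n : ℝ) := by
  induction n with
  | zero => simp [aseq]
  | succ k ih =>
    have h : (0 : ℝ) < aseq k := by exact_mod_cast aseq_pos k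
    rw [Finset.sum_range_succ, ih]
    simp only [aseq]
    push_cast
    field_simp
    ring

/-- The number `1/(a_i + 1) + 1/(n a_n)` lies in `(1/(a_i + 1), 1/a_i]`, since
`1/a_i - 1/(a_i + 1) = 1/a_{i+1}` and `a_{i+1} ≤ a_n ≤ n a_n` for `i < n`. -/
theorem floor_one_div_entitlement {n i : ℕ} (hi : i < n) :
    ⌊1 / (1 / ((aseq i : ℝ) + 1) + 1 / ((n : ℝ) * (aseq n : ℝ)))⌋₊ = aseq i := by
  have ha : (0 : ℝ) < aseq i := by exact_mod_cast aseq_pos i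
  have hA : (0 : ℝ) < aseq n := by exact_mod_cast aseq_pos n
  have hn1 : (1 : ℝ) ≤ n := by exact_mod_cast (by omega : 1 ≤ n)
  have hle : (aseq i : ℝ) * (aseq i + 1) ≤ aseq n := by
    exact_mod_cast (aseq_mono (Nat.succ_le_of_lt hi) : aseq (i + 1) ≤ aseq n)
  have hpos : (0 : ℝ) < 1 / ((n : ℝ) * (aseq n : ℝ)) := by positivity
  have hsmall : 1 / ((n : ℝ) * (aseq n : ℝ)) ≤ 1 / ((aseq i : ℝ) * (aseq i + 1)) :=
    one_div_le_one_div_of_le (by positivity) (by nlinarith)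
  have hsplit : 1 / ((aseq i : ℝ) + 1) + 1 / ((aseq i : ℝ) * (aseq i + 1)) = 1 / aseq i := by
    field_simp
  have hq : (0 : ℝ) < 1 / ((aseq i : ℝ) + 1) := by positivity
  rw [Nat.floor_eq_iff (by positivity)]
  constructor
  · rw [le_one_div ha (by positivity)]
    linarith
  · rw [one_div_lt (by positivity) (by positivity)]
    linarith

/-- for every n ≥ 1 there are entitlements b_1,…,b_n > 0 summing to 1
with ∑ b̂_i = s_n = ∑_{i=1}^n 1/a_i, where b̂ = 1/⌊1/b⌋; concretely
b_i = 1/q_i + 1/(n·a_{n+1}) with q_i = a_i + 1 works, and it has b̂_i = 1/a_i. -/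
theorem sum_unit_upper_bounds_tight (n : ℕ) (hn : 1 ≤ n) :
    ∃ b : Fin n → ℝ, (∀ i, 0 < b i) ∧ (∑ i, b i = 1) ∧
      (∑ i, ((⌊1 / b i⌋₊ : ℝ))⁻¹ = ∑ i : Fin n, (1 : ℝ) / (aseq i.val : ℝ)) ∧
      ∀ i : Fin n,
        b i = 1 / ((aseq i.val : ℝ) + 1) + 1 / ((n : ℝ) * (aseq n : ℝ)) ∧
        ((⌊1 / b i⌋₊ : ℝ))⁻¹ = 1 / (aseq i.val : ℝ) := by
  have hfloor : ∀ i : Fin n, ((⌊1 / (1 / ((aseq i.val : ℝ) + 1) +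
      1 / ((n : ℝ) * (aseq n : ℝ)))⌋₊ : ℝ))⁻¹ = 1 / (aseq i.val : ℝ) := fun i => by
    rw [floor_one_div_entitlement i.isLt, one_div]
  refine ⟨fun i => 1 / ((aseq i.val : ℝ) + 1) + 1 / ((n : ℝ) * (aseq n : ℝ)),
    fun i => by positivity, ?_, Finset.sum_congr rfl fun i _ => hfloor i,
    fun i => ⟨rfl, hfloor i⟩⟩
  have hA : (aseq n : ℝ) ≠ 0 := by exact_mod_cast (aseq_pos n).ne'
  have hn0 : (n : ℝ) ≠ 0 := by exact_mod_cast (by omega : n ≠ 0)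
  rw [Finset.sum_add_distrib, Fin.sum_univ_eq_sum_range (fun i => (1 : ℝ) / ((aseq i : ℝ) + 1)),
    sum_one_div_sylvester]
  simp only [Finset.sum_const, Finset.card_univ, Fintype.card_fin, nsmul_eq_mul]
  field_simp
  ring
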